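/- arXiv:2202.13305 — 7 statements merged into one kernel-verified Lean document; each statement's English description precedes it below -/
import Mathlib

section
/- Let ε, δ > 0 with δ < 1 and let p ∈ (0,1]. Let f be a delay function with flow-counts function F and counts-to-travel-time function τ. Let c ≥ 0 be such that f(x) ≤ (1+δ)·f(0) for all x ∈ [0,c] (i.e., c is at most the δ-capacity of the road), and assume the δ-critical traffic count condition (1+δ)·c·f(0) ≥ (1/ε)·(1/δ + 1)·log(1/p). Then for every s ≥ 0, if Z is a random variable distributed according to the Laplace measure μ_ε, with probability at least 1 − p one has |τ(s + Z) − τ(s)| ≤ (δ/(1−δ))·τ(s); that is, μ_ε { z : |τ(s + z) − τ(s)| ≤ (δ/(1−δ))·τ(s) } ≥ 1 − p. -/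
/-!
Put `M = log (1/p) / ε`. The Laplace noise satisfies `|z| ≤ M` with probability exactly `1 - p`
(`laplaceMeasure_Icc`), and the critical count condition says `M ≤ δ * c * f 0`. It therefore
suffices to show that changing the count by at most `δ * c * f 0` changes the travel time by a
factor of at most `1 + δ` (`delay_sub_le`). Let `a ≤ b` be the two flows. If `b ≤ c`, this is the
capacity hypothesis. Otherwise, since `a ≤ b` and `c < b`,
`b * (f b - f a) ≤ b * f b - a * f a ≤ δ * c * f 0 ≤ δ * b * f a`, and one divides by `b`.
This gives the relative error `δ`, which is at most `δ / (1 - δ)`.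
-/

open MeasureTheory

/-- The Laplace measure on `ℝ` with mean `0` and scale `1/ε`: the measure with density
`z ↦ (ε/2) * exp (-ε * |z|)` with respect to Lebesgue measure. -/
noncomputable def laplaceMeasure (ε : ℝ) : Measure ℝ :=
  volume.withDensity (fun z => ENNReal.ofReal (ε / 2 * Real.exp (-ε * |z|)))

lemma integral_laplace_half (ε M : ℝ) :
    ∫ z in (0 : ℝ)..M, ε / 2 * Real.exp (-ε * z) = (1 - Real.exp (-ε * M)) / 2 := by
  have hderiv : ∀ x ∈ Set.uIcc 0 M,
      HasDerivAt (fun z => -(Real.exp (-ε * z)) / 2) (ε / 2 * Real.exp (-ε * x)) x := by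
    intro x _
    have h := (((hasDerivAt_id x).const_mul (-ε)).exp.neg).div_const 2
    exact h.congr_deriv (by simp only [id]; ring)
  rw [intervalIntegral.integral_eq_sub_of_hasDerivAt hderiv
    ((by fun_prop : Continuous fun z => ε / 2 * Real.exp (-ε * z)).intervalIntegrable _ _)]
  simp
  ring

lemma laplaceMeasure_Icc (ε M : ℝ) (hε : 0 < ε) (hM : 0 ≤ M) :
    laplaceMeasure ε (Set.Icc (-M) M) = ENNReal.ofReal (1 - Real.exp (-ε * M)) := by
  have hcont : Continuous fun z : ℝ => ε / 2 * Real.exp (-ε * |z|) := by fun_prop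
  rw [laplaceMeasure, withDensity_apply _ measurableSet_Icc,
    ← ofReal_integral_eq_lintegral_ofReal (hcont.integrableOn_Icc)
      (Filter.Eventually.of_forall fun z => by positivity),
    integral_Icc_eq_integral_Ioc, ← intervalIntegral.integral_of_le (by linarith),
    ← intervalIntegral.integral_add_adjacent_intervals
      (hcont.intervalIntegrable (-M) 0) (hcont.intervalIntegrable 0 M)]
  have hright : ∫ z in (0 : ℝ)..M, ε / 2 * Real.exp (-ε * |z|)
      = (1 - Real.exp (-ε * M)) / 2 := by
    rw [← integral_laplace_half]
    refine intervalIntegral.integral_congr fun z hz => ?_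
    rw [Set.uIcc_of_le hM] at hz
    simp only [abs_of_nonneg hz.1]
  have hleft : ∫ z in (-M)..0, ε / 2 * Real.exp (-ε * |z|)
      = ∫ z in (0 : ℝ)..M, ε / 2 * Real.exp (-ε * |z|) := by
    have h := intervalIntegral.integral_comp_neg (a := 0) (b := M)
      (fun z => ε / 2 * Real.exp (-ε * |z|))
    simpa using h.symm
  rw [hleft, hright]
  congr 1
  ring

/-- Two flows whose counts differ by at most `δ * c * f 0`, where `c` is at most the
`δ`-capacity, have delays within a factor `1 + δ`. -/
lemma delay_sub_le {f : ℝ → ℝ} {δ c : ℝ} (hδ : 0 < δ)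
    (hfpos : ∀ x, 0 ≤ x → 0 < f x)
    (hfmono : ∀ x y, 0 ≤ x → x ≤ y → f x ≤ f y)
    (hc : 0 ≤ c) (hcap : ∀ x, 0 ≤ x → x ≤ c → f x ≤ (1 + δ) * f 0)
    {a b : ℝ} (ha : 0 ≤ a) (hab : a ≤ b) (h : b * f b - a * f a ≤ δ * c * f 0) :
    f b - f a ≤ δ * f a := by
  have h0a : f 0 ≤ f a := hfmono 0 a le_rfl ha
  rcases le_or_gt b c with hbc | hbc
  · have := hcap b (ha.trans hab) hbc
    nlinarith
  · have hb : 0 < b := hc.trans_lt hbc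
    have h1 : a * f a ≤ b * f a := mul_le_mul_of_nonneg_right hab (hfpos a ha).le
    have h2 : c * f 0 ≤ b * f a := mul_le_mul hbc.le h0a (hfpos 0 le_rfl).le hb.le
    have h3 : δ * (c * f 0) ≤ δ * (b * f a) := mul_le_mul_of_nonneg_left h2 hδ.le
    refine le_of_mul_le_mul_left ?_ hb
    linarith

/-- Monotonicity of the inverse of `x ↦ x * f x`, stated for the flows themselves. -/
lemma flow_le_of_count_le {f : ℝ → ℝ}
    (hfpos : ∀ x, 0 ≤ x → 0 < f x)
    (hfmono : ∀ x y, 0 ≤ x → x ≤ y → f x ≤ f y)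
    {a b : ℝ} (hb : 0 ≤ b) (h : a * f a ≤ b * f b) : a ≤ b := by
  by_contra! hlt
  have h1 : b * f b ≤ b * f a := mul_le_mul_of_nonneg_left (hfmono b a hb hlt.le) hb
  have h2 : b * f a < a * f a := mul_lt_mul_of_pos_right hlt (hfpos a (hb.trans hlt.le))
  linarith

/-- **Theorem 1 (Accuracy of Travel Time Estimates).**
If `f` is a delay function (positive, non-decreasing, differentiable on `[0,∞)`) with
flow-counts function `F x = x * f x` (with inverse `Finv`) and counts-to-travel-time
function `τ`, if `c` is at most the `δ`-capacity (i.e. `f x ≤ (1+δ) f 0` on `[0,c]`)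
and the `δ`-critical count satisfies `(1+δ) * c * f 0 ≥ (1/ε) * (1/δ + 1) * log (1/p)`,
then for every traffic count `s ≥ 0`, with probability at least `1 - p` over Laplace
noise `z` we have `|τ (s + z) - τ s| ≤ (δ/(1-δ)) * τ s`. -/
theorem travel_time_accuracy
    (ε δ p : ℝ) (hε : 0 < ε) (hδ : 0 < δ) (hδ1 : δ < 1) (hp : 0 < p) (hp1 : p ≤ 1)
    (f : ℝ → ℝ)
    (hfpos : ∀ x, 0 ≤ x → 0 < f x)
    (hfmono : ∀ x y, 0 ≤ x → x ≤ y → f x ≤ f y)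
    (hfdiff : DifferentiableOn ℝ f (Set.Ici 0))
    (Finv : ℝ → ℝ)
    (hFinv_nonneg : ∀ y, 0 ≤ y → 0 ≤ Finv y)
    (hFinv_left : ∀ x, 0 ≤ x → Finv (x * f x) = x)
    (hFinv_right : ∀ y, 0 ≤ y → Finv y * f (Finv y) = y)
    (τ : ℝ → ℝ)
    (hτ : ∀ y, τ y = if 0 ≤ y then f (Finv y) else f 0)
    (c : ℝ) (hc : 0 ≤ c)
    (hcap : ∀ x, 0 ≤ x → x ≤ c → f x ≤ (1 + δ) * f 0)
    (hcrit : (1 + δ) * c * f 0 ≥ (1 / ε) * (1 / δ + 1) * Real.log (1 / p))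
    (s : ℝ) (hs : 0 ≤ s) :
    laplaceMeasure ε {z : ℝ | |τ (s + z) - τ s| ≤ δ / (1 - δ) * τ s} ≥
      ENNReal.ofReal (1 - p) := by
  set M : ℝ := Real.log (1 / p) / ε with hMdef
  have hM : 0 ≤ M := div_nonneg (Real.log_nonneg (by rw [le_div_iff₀ hp]; linarith)) hε.le
  have hexp : Real.exp (-ε * M) = p := by
    have : -ε * M = Real.log p := by
      rw [hMdef, one_div, Real.log_inv]
      field_simp
    rw [this, Real.exp_log hp]
  have hMle : M ≤ δ * c * f 0 := by
    have h1 : (1 / ε) * (1 / δ + 1) * Real.log (1 / p) = (1 + δ) * (M / δ) := by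
      rw [hMdef]
      field_simp
    rw [h1, ge_iff_le, mul_assoc] at hcrit
    have h2 := le_of_mul_le_mul_left hcrit (by linarith)
    rw [div_le_iff₀ hδ] at h2
    linarith
  -- Negative counts correspond to flow `0`, i.e. `y` is replaced by `max y 0`.
  have hflow : ∀ y, ∃ x, 0 ≤ x ∧ τ y = f x ∧ x * f x = max y 0 := by
    intro y
    by_cases hy : 0 ≤ y
    · exact ⟨Finv y, hFinv_nonneg y hy, by rw [hτ, if_pos hy],
        by rw [hFinv_right y hy, max_eq_left hy]⟩
    · exact ⟨0, le_rfl, by rw [hτ, if_neg hy], by rw [zero_mul, max_eq_right (not_le.mp hy).le]⟩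
  rw [ge_iff_le, ← hexp, ← laplaceMeasure_Icc ε M hε hM]
  refine measure_mono fun z hz => ?_
  obtain ⟨hz1, hz2⟩ := hz
  obtain ⟨x, hx, hτx, hxs⟩ := hflow s
  obtain ⟨x', hx', hτx', hxs'⟩ := hflow (s + z)
  rw [max_eq_left hs] at hxs
  have hδle : δ * f x ≤ δ / (1 - δ) * f x := by
    refine mul_le_mul_of_nonneg_right ?_ (hfpos x hx).le
    rw [le_div_iff₀ (by linarith)]
    nlinarith
  rw [Set.mem_ofPred_eq, hτx, hτx']
  refine le_trans ?_ hδle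
  rcases le_total 0 z with hz0 | hz0
  · rw [max_eq_left (by linarith)] at hxs'
    have hle : x ≤ x' := flow_le_of_count_le hfpos hfmono hx' (by linarith)
    rw [abs_of_nonneg (sub_nonneg.mpr (hfmono x x' hx hle))]
    exact delay_sub_le hδ hfpos hfmono hc hcap hx hle (by linarith)
  · have hle : x' ≤ x := flow_le_of_count_le hfpos hfmono hx
      (by rw [hxs, hxs']; exact max_le (by linarith) hs)
    have hmono := hfmono x' x hx' hle
    have hge := le_max_left (s + z) 0
    have := delay_sub_le hδ hfpos hfmono hc hcap hx' hle (by linarith)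
    rw [abs_of_nonpos (by linarith)]
    nlinarith
end

section
/- Let ε, δ > 0, let p ∈ (0,1], and let T be a real number with T ≥ (1/ε)·(1/δ + 1)·log(1/p). Then for every real s with 0 ≤ s ≤ log(1/p)/(ε·δ), the Laplace measure satisfies μ_ε { z : s + z ≥ T } ≤ p/2. -/
/-!
Put `t = log (1/p) / ε ≥ 0`. The bounds on `T` and `s` give `T - s ≥ t`, so the event lies in
`[t, ∞)`, whose Laplace mass is exactly `exp (-ε t) / 2 = p / 2` (`laplaceMeasure_Ici`).
-/

open MeasureTheory

lemma laplaceMeasure_Ici {ε t : ℝ} (hε : 0 < ε) (ht : 0 ≤ t) :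
    laplaceMeasure ε (Set.Ici t) = ENNReal.ofReal (Real.exp (-ε * t) / 2) := by
  have hneg : -ε < 0 := by linarith
  rw [laplaceMeasure, withDensity_apply _ measurableSet_Ici,
    setLIntegral_congr Ioi_ae_eq_Ici.symm,
    -- on the half-line the absolute value can be dropped, since `0 ≤ t`
    setLIntegral_congr_fun (g := fun z => ENNReal.ofReal (ε / 2 * Real.exp (-ε * z)))
      measurableSet_Ioi
      (fun z hz => by simp only [abs_of_nonneg (ht.trans (le_of_lt hz))]),
    ← ofReal_integral_eq_lintegral_ofReal
      ((integrableOn_exp_mul_Ioi hneg t).const_mul _)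
      (Filter.Eventually.of_forall fun z => by positivity),
    integral_const_mul, integral_exp_mul_Ioi hneg]
  congr 1
  field_simp

/-- **Case 1 (probabilistic step) of Theorem 1.**
If `T ≥ (1/ε) * (1/δ + 1) * log (1/p)`, then for every `s` with
`0 ≤ s ≤ log (1/p) / (ε * δ)`, the Laplace-noised value `s + z` exceeds `T`
with probability at most `p/2`. -/
theorem laplace_exceeds_threshold
    (ε δ p T : ℝ) (hε : 0 < ε) (hδ : 0 < δ) (hp : 0 < p) (hp1 : p ≤ 1)
    (hT : T ≥ (1 / ε) * (1 / δ + 1) * Real.log (1 / p)) :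
    ∀ s : ℝ, 0 ≤ s → s ≤ Real.log (1 / p) / (ε * δ) →
      laplaceMeasure ε {z : ℝ | s + z ≥ T} ≤ ENNReal.ofReal (p / 2) := by
  intro s _ hs
  have hlog : 0 ≤ Real.log (1 / p) := Real.log_nonneg ((one_le_div hp).2 hp1)
  have hsplit : (1 / ε) * (1 / δ + 1) * Real.log (1 / p)
      = Real.log (1 / p) / (ε * δ) + Real.log (1 / p) / ε := by
    field_simp
  have hsub : {z : ℝ | s + z ≥ T} ⊆ Set.Ici (Real.log (1 / p) / ε) := by
    intro z hz
    simp only [Set.mem_ofPred_eq, Set.mem_Ici] at hz ⊢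
    linarith
  have hexp : Real.exp (-ε * (Real.log (1 / p) / ε)) = p := by
    have h : -ε * (Real.log (1 / p) / ε) = Real.log p := by
      rw [one_div, Real.log_inv]
      field_simp
    rw [h, Real.exp_log hp]
  calc laplaceMeasure ε {z : ℝ | s + z ≥ T}
      ≤ laplaceMeasure ε (Set.Ici (Real.log (1 / p) / ε)) := measure_mono hsub
    _ = ENNReal.ofReal (p / 2) := by
      rw [laplaceMeasure_Ici hε (div_nonneg hlog hε.le), hexp]
end

section
/- Let δ be a real number with 0 < δ < 1, and let f be a delay function with flow-counts function F and counts-to-travel-time function τ. Then for every real s > 0 and every real z with |z| ≤ δ·s, one has |τ(s + z) − τ(s)| ≤ (δ/(1−δ))·τ(s). -/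
/-!
Write `τ y = f (Finv y)` for `y ≥ 0`. Both `τ` and `Finv` are non-decreasing, and `τ y = y / Finv y`
for `y > 0`, so `y ↦ τ y / y = 1 / Finv y` is non-increasing. Hence for `0 ≤ u ≤ v` one has
`τ u ≤ τ v` and `u * τ v ≤ v * τ u` (`travel_time_compare`). Applied to `s` and `s + z`, in the order
given by the sign of `z`, this yields `|τ (s + z) - τ s| ≤ δ * τ s`, which is stronger than the
claimed bound because `1 ≤ 1 / (1 - δ)`.
-/

/-- Travel time `f (Finv y)` is non-decreasing in the count `y`, while its ratio to `y` is
non-increasing (stated without division). -/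
lemma travel_time_compare
    (f Finv : ℝ → ℝ)
    (hfpos : ∀ x, 0 ≤ x → 0 < f x)
    (hfmono : ∀ x y, 0 ≤ x → x ≤ y → f x ≤ f y)
    (hFinv_nonneg : ∀ y, 0 ≤ y → 0 ≤ Finv y)
    (hFinv_right : ∀ y, 0 ≤ y → Finv y * f (Finv y) = y)
    (u v : ℝ) (hu : 0 ≤ u) (huv : u ≤ v) :
    f (Finv u) ≤ f (Finv v) ∧ u * f (Finv v) ≤ v * f (Finv u) := by
  have hv : 0 ≤ v := hu.trans huv
  have ha := hFinv_nonneg u hu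
  have hb := hFinv_nonneg v hv
  have hau := hFinv_right u hu
  have hbv := hFinv_right v hv
  have hfa := hfpos _ ha
  have hfb := hfpos _ hb
  have hab : Finv u ≤ Finv v := by
    by_contra! h
    have h1 : f (Finv v) ≤ f (Finv u) := hfmono _ _ hb h.le
    have h2 : Finv v * f (Finv v) < Finv u * f (Finv u) :=
      calc Finv v * f (Finv v) ≤ Finv v * f (Finv u) := by gcongr
        _ < Finv u * f (Finv u) := by gcongr
    linarith
  refine ⟨hfmono _ _ ha hab, ?_⟩
  calc u * f (Finv v) = Finv u * (f (Finv u) * f (Finv v)) := by rw [← mul_assoc, hau]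
    _ ≤ Finv v * (f (Finv u) * f (Finv v)) := by gcongr
    _ = Finv v * f (Finv v) * f (Finv u) := by ring
    _ = v * f (Finv u) := by rw [hbv]

/-- **Case 2 (deterministic core) of Theorem 1.**
Let `0 < δ < 1` and let `f` be a delay function (positive, non-decreasing,
differentiable on `[0,∞)`) with flow-counts function `F x = x * f x` (with inverse
`Finv`) and counts-to-travel-time function `τ` (extended by `τ y = f 0` for `y < 0`).
Then for every `s > 0` and every `z` with `|z| ≤ δ * s`,
`|τ (s + z) - τ s| ≤ (δ/(1-δ)) * τ s`. -/
theorem travel_time_case_two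
    (δ : ℝ) (hδ : 0 < δ) (hδ1 : δ < 1)
    (f : ℝ → ℝ)
    (hfpos : ∀ x, 0 ≤ x → 0 < f x)
    (hfmono : ∀ x y, 0 ≤ x → x ≤ y → f x ≤ f y)
    (hfdiff : DifferentiableOn ℝ f (Set.Ici 0))
    (Finv : ℝ → ℝ)
    (hFinv_nonneg : ∀ y, 0 ≤ y → 0 ≤ Finv y)
    (hFinv_left : ∀ x, 0 ≤ x → Finv (x * f x) = x)
    (hFinv_right : ∀ y, 0 ≤ y → Finv y * f (Finv y) = y)
    (τ : ℝ → ℝ)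
    (hτ : ∀ y, τ y = if 0 ≤ y then f (Finv y) else f 0)
    (s : ℝ) (hs : 0 < s) (z : ℝ) (hz : |z| ≤ δ * s) :
    |τ (s + z) - τ s| ≤ δ / (1 - δ) * τ s := by
  have hzb := abs_le.mp hz
  -- Since `δ < 1`, the perturbed count stays nonnegative and the extension of `τ` plays no role.
  have hsz : 0 ≤ s + z := by nlinarith
  have hτs : τ s = f (Finv s) := by rw [hτ, if_pos hs.le]
  have hτz : τ (s + z) = f (Finv (s + z)) := by rw [hτ, if_pos hsz]
  have hpos : 0 < τ s := hτs ▸ hfpos _ (hFinv_nonneg s hs.le)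
  have hcmp := travel_time_compare f Finv hfpos hfmono hFinv_nonneg hFinv_right
  have key : |τ (s + z) - τ s| ≤ δ * τ s := by
    refine le_of_mul_le_mul_left ?_ hs
    rcases le_total 0 z with h | h
    · obtain ⟨h1, h2⟩ := hcmp s (s + z) hs.le (by linarith)
      rw [← hτs, ← hτz] at h1 h2
      rw [abs_of_nonneg (by linarith)]
      nlinarith [mul_le_mul_of_nonneg_right hzb.2 hpos.le]
    · obtain ⟨h1, h2⟩ := hcmp (s + z) s hsz (by linarith)
      rw [← hτs, ← hτz] at h1 h2
      rw [abs_of_nonpos (by linarith)]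
      nlinarith [mul_le_mul_of_nonneg_right hzb.1 hpos.le]
  have hδδ : δ ≤ δ / (1 - δ) := le_div_self hδ.le (by linarith) (by linarith)
  exact key.trans (mul_le_mul_of_nonneg_right hδδ hpos.le)
end

section
/- Let ε ≥ 0 and let P and Q be probability measures on a measurable space such that for every measurable set E, P(E) ≤ exp(ε)·Q(E) and Q(E) ≤ exp(ε)·P(E). Then for every measurable set A (interpreted as the acceptance region of a hypothesis test that guesses 'P' on A and 'Q' on its complement), the average success probability satisfies (1/2)·(P(A) + Q(Aᶜ)) ≤ (1 + ε)/2. -/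
open MeasureTheory

/-- **Hypothesis testing bound for differential privacy (Section 2.5.2).**
If `P` and `Q` are probability measures with `P E ≤ exp ε * Q E` and
`Q E ≤ exp ε * P E` for every measurable `E` (the output distributions of an
`ε`-differentially private mechanism on adjacent datasets), then any hypothesis test
with acceptance region `A` (guessing `P` on `A` and `Q` on `Aᶜ`) has average success
probability at most `(1 + ε) / 2`. -/
theorem dp_hypothesis_testing_bound
    {α : Type*} [MeasurableSpace α] (ε : ℝ) (hε : 0 ≤ ε)
    (P Q : Measure α) [IsProbabilityMeasure P] [IsProbabilityMeasure Q]
    (hPQ : ∀ E : Set α, MeasurableSet E → P E ≤ ENNReal.ofReal (Real.exp ε) * Q E)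
    (hQP : ∀ E : Set α, MeasurableSet E → Q E ≤ ENNReal.ofReal (Real.exp ε) * P E) :
    ∀ A : Set α, MeasurableSet A →
      1 / 2 * ((P A).toReal + (Q Aᶜ).toReal) ≤ (1 + ε) / 2 := by
  intro A hA
  -- `P A - Q A ≤ ε`: since `exp (-ε) ≥ 1 - ε`, `Q A ≥ exp (-ε) * P A ≥ P A - ε * P A ≥ P A - ε`.
  have h : P.real A ≤ Real.exp ε * Q.real A := by
    have h1 := ENNReal.toReal_mono (by finiteness) (hPQ A hA)
    rwa [ENNReal.toReal_mul, ENNReal.toReal_ofReal (Real.exp_pos ε).le] at h1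
  have h2 : Real.exp (-ε) * P.real A ≤ Q.real A := by
    calc Real.exp (-ε) * P.real A ≤ Real.exp (-ε) * (Real.exp ε * Q.real A) := by gcongr
      _ = Q.real A := by rw [← mul_assoc, ← Real.exp_add]; simp
  have h3 : (1 - ε) * P.real A ≤ Real.exp (-ε) * P.real A := by
    gcongr
    exact Real.one_sub_le_exp_neg ε
  have h4 : ε * P.real A ≤ ε := mul_le_of_le_one_right hε measureReal_le_one
  have h5 : Q.real Aᶜ = 1 - Q.real A := probReal_compl_eq_one_sub hA
  change 1 / 2 * (P.real A + Q.real Aᶜ) ≤ (1 + ε) / 2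
  linarith
end

section
/- Let p be a prime, let N ≥ 2 be an integer, and let x ∈ ZMod p be a secret. Define the additive secret-sharing distribution as the pushforward of the uniform probability mass function on (ZMod p)^(N−1) under the map (s₁, …, s_{N−1}) ↦ (s₁, …, s_{N−1}, x − ∑_{i=1}^{N−1} sᵢ) ∈ (ZMod p)^N. Then: (i) every share vector (s₁, …, s_N) in the support satisfies ∑_{i=1}^{N} sᵢ = x (correctness); and (ii) for every strict subset S ⊊ {1, …, N}, the pushforward of the share distribution under the restriction map to the coordinates in S equals the uniform probability mass function on S → ZMod p; in particular, the joint distribution of any N−1 or fewer shares does not depend on x (perfect secrecy). -/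
/-!
Correctness is immediate from the choice of the last share. For secrecy, the map `f` sending the
randomness `g` to the shares seen by `S` is affine, and its linear part is surjective: since some
agent `k` is not in `S`, any prescribed values on `S` extend to a vector with coordinate sum `0`,
the coordinate `k` absorbing the total (`exists_extension_sum_zero`). Hence every translation of
the target lifts to a translation of the source, and so the pushforward of the uniform distribution
is translation invariant, that is, uniform (`map_uniform_of_translations_lift`).
-/

theorem map_uniform_of_translations_lift {A B : Type*} [AddGroup A] [Fintype A] [Nonempty A]
    [AddGroup B] [Fintype B] [Nonempty B] (f : A → B)
    (hf : ∀ d : B, ∃ h : A, ∀ a, f (a + h) = f a + d) :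
    (PMF.uniformOfFintype A).map f = PMF.uniformOfFintype B := by
  classical
  have key : ∀ b, (PMF.uniformOfFintype A).map f b = (PMF.uniformOfFintype A).map f 0 := by
    intro b
    obtain ⟨h, hh⟩ := hf b
    simp only [PMF.map_apply, tsum_fintype, PMF.uniformOfFintype_apply]
    rw [← Equiv.sum_comp (Equiv.addRight h)]
    refine Finset.sum_congr rfl fun a _ => ?_
    have : b = f (a + h) ↔ 0 = f a := by
      rw [hh, eq_comm, add_eq_right, eq_comm]
    simp only [Equiv.coe_addRight, this]
  -- A constant mass function on a finite type has total mass `1`, which determines the constant.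
  have hsum := ((PMF.uniformOfFintype A).map f).tsum_coe
  rw [tsum_fintype, Finset.sum_congr rfl (fun b _ => key b), Finset.sum_const, nsmul_eq_mul,
    Finset.card_univ, mul_comm] at hsum
  ext b
  rw [key b, PMF.uniformOfFintype_apply]
  exact ENNReal.eq_inv_of_mul_eq_one_left hsum

theorem exists_extension_sum_zero {ι M : Type*} [Fintype ι] [AddCommGroup M]
    (S : Finset ι) (hS : S ≠ Finset.univ) (d : {i // i ∈ S} → M) :
    ∃ v : ι → M, (∀ i : {i // i ∈ S}, v i = d i) ∧ ∑ i, v i = 0 := by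
  classical
  obtain ⟨k, hk⟩ : ∃ k, k ∉ S := by
    by_contra! h
    exact hS (Finset.eq_univ_iff_forall.2 h)
  let w : ι → M := fun i => if h : i ∈ S then d ⟨i, h⟩ else 0
  refine ⟨w - Pi.single k (∑ i, w i), fun i => ?_, ?_⟩
  · have hik : (i : ι) ≠ k := fun h => hk (h ▸ i.2)
    simp [w, hik]
  · simp [Finset.sum_sub_distrib]

/-- **Additive secret sharing: correctness and perfect secrecy (Section 3.2.1).**
Shares `s₁, …, s_{N-1}` are drawn independently and uniformly from `ZMod p` and the
last share is `s_N := x - ∑_{i<N-1} sᵢ`. Then (i) every share vector in the support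
sums to the secret `x`, and (ii) for every strict subset `S` of the agents, the joint
distribution of the shares in `S` is uniform on `S → ZMod p` (hence independent of
`x`). -/
theorem additive_secret_sharing
    (p : ℕ) (hp : p.Prime) [Fact p.Prime] (N : ℕ) (hN : 2 ≤ N) (x : ZMod p) :
    ∀ D : PMF (Fin N → ZMod p),
      D = (PMF.uniformOfFintype (Fin (N - 1) → ZMod p)).map
            (fun g => fun i : Fin N =>
              if h : (i : ℕ) < N - 1 then g ⟨i, h⟩ else x - ∑ j, g j) →
      (∀ v ∈ D.support, ∑ i, v i = x) ∧
      (∀ S : Finset (Fin N), S ≠ Finset.univ →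
        D.map (fun v => fun i : {i // i ∈ S} => v i) =
          PMF.uniformOfFintype ({i // i ∈ S} → ZMod p)) := by
  rintro D rfl
  obtain ⟨n, rfl⟩ : ∃ n, N = n + 1 := ⟨N - 1, by omega⟩
  refine ⟨fun v hv => ?_, fun S hS => ?_⟩
  · rw [PMF.mem_support_map_iff] at hv
    obtain ⟨g, -, rfl⟩ := hv
    rw [Fin.sum_univ_castSucc]
    simp
  · rw [PMF.map_comp]
    apply map_uniform_of_translations_lift
    intro d
    obtain ⟨v, hv, hsum⟩ := exists_extension_sum_zero S hS d
    -- Shift the randomness by the first `n` coordinates of `v`; as `v` sums to `0`, the last share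
    -- is then shifted by the last coordinate of `v`.
    refine ⟨fun j : Fin n => v j.castSucc, fun g => ?_⟩
    rw [Fin.sum_univ_castSucc] at hsum
    funext i
    rw [Pi.add_apply, ← hv i]
    obtain ⟨i, hi⟩ := i
    induction i using Fin.lastCases with
    | last =>
      simp [Finset.sum_add_distrib]
      rw [eq_neg_of_add_eq_zero_right hsum]
      abel
    | cast j => simp
end

section
/- Let p be a prime, let k ≥ 1 and N be integers with N < p, and let x ∈ ZMod p be a secret. For a coefficient vector C = (C₁, …, C_{k−1}) ∈ (ZMod p)^{k−1}, define the polynomial evaluation X_C(z) := x + ∑_{ℓ=1}^{k−1} C_ℓ·z^ℓ. Then for every subset S ⊆ {1, …, N} with |S| ≤ k − 1 (the evaluation points i ∈ S regarded as distinct nonzero elements of ZMod p, which holds since N < p), the pushforward of the uniform probability mass function on (ZMod p)^{k−1} under the map C ↦ (X_C(i))_{i∈S} equals the uniform probability mass function on S → ZMod p; in particular, the joint distribution of any k−1 or fewer Shamir shares does not depend on x. -/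
/-!
The share map `C ↦ (X_C(i))_{i ∈ S}` is a translate of the linear map
`C ↦ (∑ ℓ, C ℓ * i ^ (ℓ + 1))_{i ∈ S}`. That linear map is surjective: to reach a target `y`,
take for `C` the coefficients of the Lagrange interpolant, of degree `< |S| ≤ k - 1`, of the
values `y i / i` at the distinct nonzero points `i ∈ S` (`shamir_linear_surjective`).
All fibres of a surjective homomorphism of finite groups have the same size, so such a map, and
any translate of it, sends the uniform distribution to the uniform distribution
(`map_uniform_add_hom`).
-/

/-- A PMF on a finite type that gives all points the same mass is uniform. -/
lemma eq_uniformOfFintype_of_const {α : Type*} [Fintype α] [Nonempty α] (q : PMF α)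
    (h : ∀ a b, q a = q b) : q = PMF.uniformOfFintype α := by
  ext a
  have hsum := q.tsum_coe
  rw [tsum_fintype, Finset.sum_congr rfl (fun b _ => h b a), Finset.sum_const,
    Finset.card_univ, nsmul_eq_mul, mul_comm] at hsum
  rw [PMF.uniformOfFintype_apply]
  exact ENNReal.eq_inv_of_mul_eq_one_left hsum

lemma map_uniform_add_hom {G H : Type*} [AddCommGroup G] [AddCommGroup H] [Fintype G]
    [Fintype H] (φ : G →+ H) (hφ : Function.Surjective φ) (t : H) :
    (PMF.uniformOfFintype G).map (fun g => t + φ g) = PMF.uniformOfFintype H := by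
  classical
  refine eq_uniformOfFintype_of_const _ fun a b => ?_
  obtain ⟨d, hd⟩ := hφ (b - a)
  simp only [PMF.map_apply, PMF.uniformOfFintype_apply]
  -- Translation by a preimage `d` of `b - a` carries the fibre over `a` to the fibre over `b`.
  refine Eq.trans ?_ ((Equiv.addRight d).tsum_eq _)
  refine tsum_congr fun g => ?_
  have : (a = t + φ g) ↔ (b = t + φ (Equiv.addRight d g)) := by
    rw [Equiv.coe_addRight, map_add, hd]
    constructor
    · rintro rfl; abel
    · intro h
      have h' : a + b = t + φ g + b := by
        nth_rewrite 1 [h]; abel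
      exact add_right_cancel h'
  simp only [this]

/-- Prescribing the values at no more than `n` distinct nonzero points of a polynomial of degree `≤ n`
with zero constant term is always possible. -/
lemma shamir_linear_surjective {F ι : Type*} [Field F] [Fintype ι] (n : ℕ) (v : ι → F)
    (hv : Function.Injective v) (hv0 : ∀ i, v i ≠ 0) (hn : Fintype.card ι ≤ n) (y : ι → F) :
    ∃ C : Fin n → F, ∀ i, ∑ ℓ : Fin n, C ℓ * v i ^ ((ℓ : ℕ) + 1) = y i := by
  classical
  let P := Lagrange.interpolate Finset.univ v (fun i => y i / v i)
  have hP : P ∈ Polynomial.degreeLT F n := by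
    rw [Polynomial.mem_degreeLT]
    refine (Lagrange.degree_interpolate_lt _ hv.injOn).trans_le ?_
    exact_mod_cast hn
  refine ⟨Polynomial.degreeLTEquiv F n ⟨P, hP⟩, fun i => ?_⟩
  have he : P.eval (v i) = y i / v i :=
    Lagrange.eval_interpolate_at_node _ hv.injOn (Finset.mem_univ i)
  rw [Polynomial.eval_eq_sum_degreeLTEquiv hP] at he
  simp only [pow_succ, ← mul_assoc]
  rw [← Finset.sum_mul, he, div_mul_cancel₀ _ (hv0 i)]

/-- **Shamir secret sharing: perfect secrecy (Section 3.2.2).**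
To share `x ∈ ZMod p`, draw coefficients `C₁, …, C_{k-1}` independently and uniformly
from `ZMod p` and form `X_C(z) = x + ∑_ℓ C_ℓ z^ℓ`. Then for every subset
`S ⊆ {1, …, N}` of at most `k - 1` evaluation points (distinct and nonzero in `ZMod p`
since `N < p`), the joint distribution of the shares `(X_C(i))_{i ∈ S}` is uniform on
`S → ZMod p`; in particular it does not depend on `x`. -/
theorem shamir_secret_sharing_secrecy
    (p : ℕ) (hp : p.Prime) [Fact p.Prime] (k N : ℕ) (hk : 1 ≤ k) (hNp : N < p)
    (x : ZMod p)
    (S : Finset ℕ) (hS : S ⊆ Finset.Icc 1 N) (hcard : S.card ≤ k - 1) :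
    (PMF.uniformOfFintype (Fin (k - 1) → ZMod p)).map
        (fun C => fun i : {i // i ∈ S} =>
          x + ∑ ℓ : Fin (k - 1), C ℓ * ((i : ℕ) : ZMod p) ^ ((ℓ : ℕ) + 1)) =
      PMF.uniformOfFintype ({i // i ∈ S} → ZMod p) := by
  -- Evaluation points lie in `[1, p)`, where the cast to `ZMod p` is injective and nonzero.
  have hval : ∀ i : {i // i ∈ S}, ((i : ℕ) : ZMod p).val = i := fun i =>
    ZMod.val_natCast_of_lt ((Finset.mem_Icc.1 (hS i.2)).2.trans_lt hNp)
  have hinj : Function.Injective fun i : {i // i ∈ S} => ((i : ℕ) : ZMod p) := by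
    intro i j hij
    have := congrArg ZMod.val hij
    simp only [hval] at this
    exact Subtype.ext this
  have hne : ∀ i : {i // i ∈ S}, ((i : ℕ) : ZMod p) ≠ 0 := by
    intro i h0
    have h1 := hval i
    rw [h0, ZMod.val_zero] at h1
    have := (Finset.mem_Icc.1 (hS i.2)).1
    omega
  let φ : (Fin (k - 1) → ZMod p) →+ ({i // i ∈ S} → ZMod p) :=
    { toFun := fun C i => ∑ ℓ : Fin (k - 1), C ℓ * ((i : ℕ) : ZMod p) ^ ((ℓ : ℕ) + 1)
      map_zero' := by ext i; simp
      map_add' := fun C D => by ext i; simp [add_mul, Finset.sum_add_distrib] }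
  have hφ : Function.Surjective φ := fun y => by
    obtain ⟨C, hC⟩ := shamir_linear_surjective (k - 1) _ hinj hne (by simpa using hcard) y
    exact ⟨C, funext hC⟩
  exact map_uniform_add_hom φ hφ fun _ => x
end

section
/- Let p be a prime and N ≥ 1 an integer with p > N. Let V be the N×N matrix over ZMod p with entries V_{i,j} = i^j for i ∈ {1, …, N} and j ∈ {0, …, N−1} (the Vandermonde matrix at the points 1, …, N regarded in ZMod p). Then V is invertible, and setting λᵢ := the (1,i) entry of V⁻¹ (the entry of the first row, corresponding to the constant coefficient), every polynomial H over ZMod p of degree at most N−1 satisfies H(0) = ∑_{i=1}^{N} λᵢ·H(i). In particular, if X and Y are polynomials over ZMod p of degree at most (N−1)/2 with X(0) = x and Y(0) = y, then ∑_{i=1}^{N} λᵢ·X(i)·Y(i) = x·y. -/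
/-!
The points `1, …, N` are distinct in `ZMod p` because `N < p`, so the Vandermonde determinant is
nonzero. If `c` is the coefficient vector of a polynomial `H` of degree at most `N - 1`, then
`V *ᵥ c` is the vector of values `H(1), …, H(N)`; hence the first row of `V⁻¹`, applied to
these values, returns the constant coefficient `c 0 = H(0)`. Taking `H = X * Y` gives the product.
-/

/-- **Correctness of Secure Multi-Party Multiplication (Example 2, Section 3.2.2).**
Let `V` be the `N × N` Vandermonde matrix over `ZMod p` at the points `1, …, N`
(distinct since `N < p`), i.e. `V i j = (i+1)^j`. Then `V` is invertible, and with
`λᵢ` the entries of the first row of `V⁻¹`, every polynomial `H` of degree at most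
`N - 1` satisfies `H(0) = ∑ᵢ λᵢ * H(i)`. In particular, if `X, Y` have degree at most
`(N-1)/2` with constant terms `x, y`, then `∑ᵢ λᵢ * X(i) * Y(i) = x * y`. -/
theorem vandermonde_reconstruction
    (p : ℕ) (hp : p.Prime) [Fact p.Prime] (N : ℕ) (hN : 0 < N) (hNp : N < p) :
    ∀ V : Matrix (Fin N) (Fin N) (ZMod p),
      V = Matrix.of (fun i j : Fin N => (((i : ℕ) + 1 : ℕ) : ZMod p) ^ (j : ℕ)) →
      IsUnit V ∧
      (∀ H : Polynomial (ZMod p), H.natDegree ≤ N - 1 →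
        Polynomial.eval 0 H =
          ∑ i : Fin N, V⁻¹ ⟨0, hN⟩ i * Polynomial.eval (((i : ℕ) + 1 : ℕ) : ZMod p) H) ∧
      (∀ (x y : ZMod p) (X Y : Polynomial (ZMod p)),
        X.natDegree ≤ (N - 1) / 2 → Y.natDegree ≤ (N - 1) / 2 →
        Polynomial.eval 0 X = x → Polynomial.eval 0 Y = y →
        ∑ i : Fin N, V⁻¹ ⟨0, hN⟩ i *
            (Polynomial.eval (((i : ℕ) + 1 : ℕ) : ZMod p) X *
              Polynomial.eval (((i : ℕ) + 1 : ℕ) : ZMod p) Y) = x * y) := by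
  intro V hV
  have hVand : V = Matrix.vandermonde (fun i : Fin N => (((i : ℕ) + 1 : ℕ) : ZMod p)) := hV
  have hinj : Function.Injective (fun i : Fin N => (((i : ℕ) + 1 : ℕ) : ZMod p)) := by
    intro i j hij
    have h := (ZMod.natCast_eq_natCast_iff' _ _ _).mp hij
    have hi := i.isLt
    have hj := j.isLt
    rw [Nat.mod_eq_of_lt (by omega), Nat.mod_eq_of_lt (by omega)] at h
    exact Fin.ext (by omega)
  have hdet : IsUnit V.det := by
    rw [isUnit_iff_ne_zero, hVand]
    exact Matrix.det_vandermonde_ne_zero_iff.mpr hinj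
  have hrec : ∀ H : Polynomial (ZMod p), H.natDegree ≤ N - 1 →
      Polynomial.eval 0 H =
        ∑ i : Fin N, V⁻¹ ⟨0, hN⟩ i * Polynomial.eval (((i : ℕ) + 1 : ℕ) : ZMod p) H := by
    intro H hH
    have hval : V.mulVec (fun j : Fin N => H.coeff j) =
        fun i : Fin N => Polynomial.eval (((i : ℕ) + 1 : ℕ) : ZMod p) H := by
      funext i
      rw [Polynomial.eval_eq_sum_range' (show H.natDegree < N by omega),
        ← Fin.sum_univ_eq_sum_range
          (fun j => H.coeff j * (((i : ℕ) + 1 : ℕ) : ZMod p) ^ j) N, hVand]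
      simp only [Matrix.mulVec, dotProduct, Matrix.vandermonde_apply, mul_comm]
    have hinv := congrArg (fun w => V⁻¹.mulVec w ⟨0, hN⟩) hval
    simp only [Matrix.mulVec_mulVec, Matrix.nonsing_inv_mul V hdet, Matrix.one_mulVec] at hinv
    rw [← Polynomial.coeff_zero_eq_eval_zero]
    exact hinv
  refine ⟨(Matrix.isUnit_iff_isUnit_det V).mpr hdet, hrec, ?_⟩
  intro x y X Y hX hY hx hy
  have hdeg : (X * Y).natDegree ≤ N - 1 := by
    have := Polynomial.natDegree_mul_le (p := X) (q := Y)
    omega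
  have h := hrec (X * Y) hdeg
  simp only [Polynomial.eval_mul, hx, hy] at h
  exact h.symm
end
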